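/- Let $n, \tilde{n}, d, p, i$ be integers with $0 \le d < \min\{n,\tilde{n}\}$, $1 \le p \le \min\{n,\tilde{n}\}-d$ and $0 \le i \le d$. Let $h$ map a co-signotope $\tau \in \bar{\mathcal{S}}_{p,i}(n,d)$ to the sign function $\tilde{\tau}:\binom{[\tilde{n}]}{d}\to\{+,-\}$ whose $+$-subsets are exactly the sets obtained from the $+$-subsets $B=(b_1<\dots<b_d)$ of $\tau$ by keeping $b_j$ for $j \le i$ and replacing $b_j$ by $b_j + \tilde{n} - n$ for $j > i$ (equivalently, $\tilde{\tau}^{-1}(+)=\{g^{-1}_{\tilde{n},d,i}(g_{n,d,i}(B)) \mid B\in\tau^{-1}(+)\}$). Then $h$ is a bijection between $\bar{\mathcal{S}}_{p,i}(n,d)$ and $\bar{\mathcal{S}}_{p,i}(\tilde{n},d)$; moreover, if additionally $p+1 \le \min\{n,\tilde{n}\}-d$ and $\tau\in\bar{\mathcal{S}}_{p,i}(n,d)$, $\rho\in\bar{\mathcal{S}}_{p+1,i}(n,d)$ differ by a single step, then their images differ by a single step. -/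

import Mathlib

/-! Common definitions: signotopes and co-signotopes on `[n] = {1, …, n}` (encoded as
`Finset.Icc 1 n` in `ℕ`), sign functions are `Finset ℕ → Bool` (`true` = `+`, `false` = `-`)
that vanish (are `-`) away from the relevant subsets. -/

open Classical in
/-- The sign function with `+`-set `S` (and `-` elsewhere). -/
noncomputable def ofPlusSet (S : Set (Finset ℕ)) : Finset ℕ → Bool :=
  fun A => if A ∈ S then true else false

/-- Number of sign changes in a list of signs. -/
def signChanges (l : List Bool) : ℕ :=
  ((l.zip l.tail).filter fun p => p.1 ≠ p.2).length

/-- Number of `+`-subsets of a sign function. -/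
noncomputable def plusCount (τ : Finset ℕ → Bool) : ℕ :=
  {A : Finset ℕ | τ A = true}.ncard

/-- The series of signs `τ (C ∪ {x})` for `x ∈ [n] \ C` in increasing order.
For a `d`-subset `B` with `i`-th smallest element `b`, `series n τ (B.erase b)` is
the `(τ,B,i)`-series. -/
def series (n : ℕ) (τ : Finset ℕ → Bool) (C : Finset ℕ) : List Bool :=
  ((Finset.Icc 1 n \ C).sort (· ≤ ·)).map fun x => τ (insert x C)

/-- An `r`-signotope on `[n]`, encoded as a sign function on all of `Finset ℕ`
which is `-` away from the `r`-subsets of `[n]`. -/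
def IsSignotope (n r : ℕ) (σ : Finset ℕ → Bool) : Prop :=
  (∀ A, σ A = true → A ⊆ Finset.Icc 1 n ∧ A.card = r) ∧
  ∀ X : Finset ℕ, X ⊆ Finset.Icc 1 n → X.card = r + 1 →
    signChanges ((X.sort (· ≤ ·)).map fun x => σ (X.erase x)) ≤ 1

/-- A `d`-co-signotope on `[n]`: every `(τ,B,i)`-series has at most one sign change. -/
def IsCoSignotope (n d : ℕ) (τ : Finset ℕ → Bool) : Prop :=
  (∀ A, τ A = true → A ⊆ Finset.Icc 1 n ∧ A.card = d) ∧
  ∀ B : Finset ℕ, B ⊆ Finset.Icc 1 n → B.card = d → ∀ b ∈ B,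
    signChanges (series n τ (B.erase b)) ≤ 1

/-- `𝒮_p(n,r)`: `r`-signotopes on `[n]` with exactly `p` `+`-signs. -/
noncomputable def sigSet (n r p : ℕ) : Set (Finset ℕ → Bool) :=
  {σ | IsSignotope n r σ ∧ plusCount σ = p}

/-- `𝒮_{≤p}(n,r)`. -/
noncomputable def sigSetLe (n r p : ℕ) : Set (Finset ℕ → Bool) :=
  {σ | IsSignotope n r σ ∧ plusCount σ ≤ p}

/-- `𝒮̄_p(n,d)`: `d`-co-signotopes on `[n]` with exactly `p` `+`-subsets. -/
noncomputable def coSigSet (n d p : ℕ) : Set (Finset ℕ → Bool) :=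
  {τ | IsCoSignotope n d τ ∧ plusCount τ = p}

/-- `𝒮̄_{≤p}(n,d)`. -/
noncomputable def coSigSetLe (n d p : ℕ) : Set (Finset ℕ → Bool) :=
  {τ | IsCoSignotope n d τ ∧ plusCount τ ≤ p}

/-- `σ` and `τ` differ by a single step: `σ⁻¹(+) ⊊ τ⁻¹(+)` and `|τ⁻¹(+)| = |σ⁻¹(+)| + 1`. -/
noncomputable def SingleStep (σ τ : Finset ℕ → Bool) : Prop :=
  {A | σ A = true} ⊂ {A | τ A = true} ∧ plusCount τ = plusCount σ + 1

/-- The higher Bruhat order on `r`-signotopes on `[n]`: reflexive-transitive closure of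
the single step relation. -/
noncomputable def BruhatLe (n r : ℕ) (σ τ : Finset ℕ → Bool) : Prop :=
  Relation.ReflTransGen (fun a b => IsSignotope n r a ∧ IsSignotope n r b ∧ SingleStep a b) σ τ

/-- The complementary higher Bruhat order on `d`-co-signotopes on `[n]`. -/
noncomputable def CoBruhatLe (n d : ℕ) (σ τ : Finset ℕ → Bool) : Prop :=
  Relation.ReflTransGen (fun a b => IsCoSignotope n d a ∧ IsCoSignotope n d b ∧ SingleStep a b) σ τ

/-- Adjacency in the graph `G_{n,d}`: `B' = (B \ {x}) ∪ {y}` with no element of `B \ {x}`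
strictly between `x` and `y`. -/
def GAdj (n d : ℕ) (B B' : Finset ℕ) : Prop :=
  B ⊆ Finset.Icc 1 n ∧ B.card = d ∧ B' ⊆ Finset.Icc 1 n ∧ B'.card = d ∧
  ∃ x ∈ B, ∃ y ∈ Finset.Icc 1 n, y ∉ B ∧ B' = insert y (B.erase x) ∧
    ∀ z ∈ B.erase x, ¬(min x y < z ∧ z < max x y)

/-- The source subset `S_{n,d,i} = {1,…,i} ∪ {n-d+i+1,…,n}`. -/
def sourceSubset (n d i : ℕ) : Finset ℕ :=
  Finset.Icc 1 i ∪ Finset.Icc (n - d + i + 1) n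

/-- Connectivity inside the `+`-subsets of `τ` (the induced subgraph `G_{n,d}[τ]`). -/
def plusConn (n d : ℕ) (τ : Finset ℕ → Bool) : Finset ℕ → Finset ℕ → Prop :=
  Relation.ReflTransGen fun A A' => τ A = true ∧ τ A' = true ∧ GAdj n d A A'

/-- The vertex set `𝒞^τ_i` of the `+`-component of `τ` containing `S_{n,d,i}`
(empty if `S_{n,d,i}` is not a `+`-subset). -/
def comp (n d : ℕ) (τ : Finset ℕ → Bool) (i : ℕ) : Set (Finset ℕ) :=
  {B | τ (sourceSubset n d i) = true ∧ τ B = true ∧ plusConn n d τ (sourceSubset n d i) B}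

/-- The `j`-th smallest element (1-based) of a finite set of naturals. -/
def nthElt (B : Finset ℕ) (j : ℕ) : ℕ := (B.sort (· ≤ ·)).getD (j - 1) 0

/-- `b_j` with the conventions `b_0 = 0` and `b_{d+1} = n+1` (as an integer). -/
def extNth (n d : ℕ) (B : Finset ℕ) (j : ℕ) : ℤ :=
  if j = 0 then 0 else if j ≤ d then (nthElt B j : ℤ) else (n : ℤ) + 1

/-- A series is left-aligned if it starts with `+` and ends with `-`. -/
def LeftAligned (l : List Bool) : Prop :=
  l.head? = some true ∧ l.getLast? = some false

/-- A series is right-aligned if it starts with `-` and ends with `+`. -/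
def RightAligned (l : List Bool) : Prop :=
  l.head? = some false ∧ l.getLast? = some true

/-- `𝒮̄_{p,i}(n,d)`: co-signotopes in `𝒮̄_p(n,d)` whose only nonempty `+`-component
is `𝒞^τ_i` (i.e. every `+`-subset lies in `𝒞^τ_i`). -/
noncomputable def coSigOnly (n d p i : ℕ) : Set (Finset ℕ → Bool) :=
  {τ | IsCoSignotope n d τ ∧ plusCount τ = p ∧ ∀ B, τ B = true → B ∈ comp n d τ i}

/-- `Z(d,i)`: points `(a_1,…,a_d) ∈ ℤ_{>0}^d` (0-indexed in Lean) with `a_j ≥ a_{j-1}`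
for `j ∈ [2,i]` and `a_j ≥ a_{j+1}` for `j ∈ [i+1,d-1]` (1-based indices). -/
def ZSet (d i : ℕ) : Set (Fin d → ℤ) :=
  {a | (∀ j, 0 < a j) ∧
    (∀ j k : Fin d, (j : ℕ) + 1 = (k : ℕ) → (k : ℕ) + 1 ≤ i → a j ≤ a k) ∧
    (∀ j k : Fin d, (j : ℕ) + 1 = (k : ℕ) → i ≤ (j : ℕ) → a k ≤ a j)}

/-- A `(d,i)`-Ferrers diagram with respect to `p`. -/
def IsFerrers (d i p : ℕ) (F : Set (Fin d → ℤ)) : Prop :=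
  F ⊆ ZSet d i ∧ F.ncard = p ∧
  ∀ a ∈ F, ∀ a' ∈ ZSet d i, (∀ j, a' j ≤ a j) → a' ∈ F

/-- The number of `(d,i)`-Ferrers diagrams with respect to `p`. -/
noncomputable def ferrersCount (d i p : ℕ) : ℕ :=
  {F : Set (Fin d → ℤ) | IsFerrers d i p F}.ncard

/-- `f_{n,d,i,j}` (here `j` is the 1-based coordinate index). -/
def fFun (n d i j : ℕ) (x : ℕ) : ℤ :=
  if j ≤ i then (x : ℤ) - j + 1 else ((n : ℤ) - x) - ((d : ℤ) - j) + 1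

/-- `g_{n,d,i}` maps a `d`-subset `B = (b_1 < … < b_d)` to
`(f_{n,d,i,1}(b_1), …, f_{n,d,i,d}(b_d))`. -/
def gMap (n d i : ℕ) (B : Finset ℕ) : Fin d → ℤ :=
  fun k => fFun n d i ((k : ℕ) + 1) (nthElt B ((k : ℕ) + 1))

/-- A sparse composition of `p` of length `d+1`. -/
def IsSparseComposition (d p : ℕ) (c : Fin (d + 1) → ℕ) : Prop :=
  (∑ i, c i) = p ∧
  ∀ i : Fin (d + 1), 1 ≤ (i : ℕ) →
    c i = 0 ∨ c ⟨(i : ℕ) - 1, lt_of_le_of_lt (Nat.sub_le _ _) i.isLt⟩ = 0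

/-- The component `τ_i` of the `+`-component decomposition `Δ(τ)`:
the sign function whose `+`-set is `𝒞^τ_i`. -/
noncomputable def compFun (n d : ℕ) (τ : Finset ℕ → Bool) (i : ℕ) : Finset ℕ → Bool :=
  ofPlusSet (comp n d τ i)

/-- Keep the `i` smallest elements of `B` and shift the others by `ñ - n`
(this is `g⁻¹_{ñ,d,i} ∘ g_{n,d,i}` on `d`-subsets). -/
def gammaSet (n tn i : ℕ) (B : Finset ℕ) : Finset ℕ :=
  ((B.sort (· ≤ ·)).mapIdx fun k x => if k < i then x else x + tn - n).toFinset

/-- The map `h_{n,ñ,d,p,i}` on sign functions. -/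
noncomputable def hFun (n tn i : ℕ) (τ : Finset ℕ → Bool) : Finset ℕ → Bool :=
  ofPlusSet {A | ∃ B, τ B = true ∧ A = gammaSet n tn i B}

open Classical in
/-- `γ_{τ,ñ}(B)`: replace `b_j` by `b_j + ñ - n` whenever the `(τ,B,j)`-series is
right-aligned. -/
noncomputable def gammaFun (n tn : ℕ) (τ : Finset ℕ → Bool) (B : Finset ℕ) : Finset ℕ :=
  B.image fun x => if RightAligned (series n τ (B.erase x)) then x + tn - n else x

/-- The simple bijection `φ_{n,ñ,d,p}` on sign functions. -/
noncomputable def phiFun (n tn : ℕ) (τ : Finset ℕ → Bool) : Finset ℕ → Bool :=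
  ofPlusSet {A | ∃ B, τ B = true ∧ A = gammaFun n tn τ B}

/-! A co-signotope is determined by its set `P` of `+`-subsets. If `P` is small (`p + d ≤ n`) and
`S_{n,d,i}` is its only source, then `P` is *compressed*: replacing one of the `i` smallest
elements of a member by a smaller one, or one of the others by a larger one, stays inside `P`.
Indeed the series at `S_{n,d,i}` start or end with `+`, and this alignment propagates along the
edges of `G_{n,d}`: if it were lost, two distinct series of opposite alignment would fill `[1, k]`
and `[k, n]`, which costs at least `n - d + 1` `+`-subsets. Conversely, small compressed families
are co-signotopes by the same count, and outward exchanges connect their members to `S_{n,d,i}`.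

The same count also leaves a large enough gap between the `i`-th and the `(i+1)`-st element of
each member of `P`, so that shifting the upper elements by `ñ - n` neither reorders elements nor
loses any room for exchanges. Hence it maps compressed families to compressed families, and
shifting back is its inverse. -/

open Finset

/-- The set `τ⁻¹(+)` of `+`-subsets, by which sign functions are represented below. -/
abbrev plusSet (τ : Finset ℕ → Bool) : Set (Finset ℕ) := {A | τ A = true}

section Series

lemma signChanges_cons_cons (a b : Bool) (l : List Bool) :
    signChanges (a :: b :: l) = (if a = b then 0 else 1) + signChanges (b :: l) := by
  by_cases h : a = b <;> simp [signChanges, h, Nat.add_comm]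

lemma signChanges_cons_eq_zero_iff (a : Bool) (l : List Bool) :
    signChanges (a :: l) = 0 ↔ ∀ b ∈ l, b = a := by
  induction l generalizing a with
  | nil => simp [signChanges]
  | cons b l ih =>
    rw [signChanges_cons_cons]
    by_cases h : a = b
    · simp [h, ih]
    · simp [h, Ne.symm h]

lemma signChanges_le_one_iff (l : List Bool) :
    signChanges l ≤ 1 ↔ l.Pairwise (· ≥ ·) ∨ l.Pairwise (· ≤ ·) := by
  induction l with
  | nil => simp [signChanges]
  | cons a l ih =>
    cases l with
    | nil => simp [signChanges]
    | cons b l =>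
      rw [signChanges_cons_cons]
      by_cases h : a = b
      · subst h
        rw [if_pos rfl, zero_add, ih]
        cases a <;> simp [List.pairwise_cons]
      · have hconst : (if a = b then 0 else 1) + signChanges (b :: l) ≤ 1 ↔ ∀ c ∈ l, c = b := by
          rw [if_neg h, ← signChanges_cons_eq_zero_iff]
          omega
        rw [hconst]
        have hpair (R : Bool → Bool → Prop) (hR : R b b) (hl : ∀ c ∈ l, c = b) :
            l.Pairwise R :=
          List.pairwise_of_forall_mem_list fun x hx y hy => by rwa [hl x hx, hl y hy]
        cases a <;> cases b <;> simp_all [List.pairwise_cons, Bool.le_iff_imp]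

lemma pairwise_sort_iff {α : Type*} [LinearOrder α] (s : Finset α) (R : α → α → Prop) :
    s.sort.Pairwise R ↔ ∀ x ∈ s, ∀ y ∈ s, x < y → R x y := by
  have hlt : s.sort.Pairwise (· < ·) := s.sortedLT_sort.pairwise
  refine ⟨fun h x hx y hy hxy => ?_, fun h => hlt.imp_of_mem fun hx hy =>
    h _ ((mem_sort _).1 hx) _ ((mem_sort _).1 hy)⟩
  obtain ⟨j, hj, rfl⟩ := List.getElem_of_mem ((mem_sort (· ≤ ·)).2 hx)
  obtain ⟨k, hk, rfl⟩ := List.getElem_of_mem ((mem_sort (· ≤ ·)).2 hy)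
  exact List.pairwise_iff_getElem.1 h j k hj hk (s.sortedLT_sort.getElem_lt_getElem_iff.1 hxy)

/-- The series of `P` at `A`, the signs of `A ∪ {x}` for increasing `x ∈ [n] \ A`, has the form
`+⋯+-⋯-`, where `P` is the set of `+`-subsets. -/
def IsLowerSeries (n : ℕ) (P : Set (Finset ℕ)) (A : Finset ℕ) : Prop :=
  ∀ x ∈ Icc 1 n \ A, ∀ y ∈ Icc 1 n \ A, x < y → insert y A ∈ P → insert x A ∈ P

/-- The series of `P` at `A` has the form `-⋯-+⋯+`. -/
def IsUpperSeries (n : ℕ) (P : Set (Finset ℕ)) (A : Finset ℕ) : Prop :=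
  ∀ x ∈ Icc 1 n \ A, ∀ y ∈ Icc 1 n \ A, x < y → insert x A ∈ P → insert y A ∈ P

lemma signChanges_series_le_one_iff (n : ℕ) (τ : Finset ℕ → Bool) (A : Finset ℕ) :
    signChanges (series n τ A) ≤ 1 ↔
      IsLowerSeries n (plusSet τ) A ∨ IsUpperSeries n (plusSet τ) A := by
  simp only [series, signChanges_le_one_iff, List.pairwise_map, pairwise_sort_iff]
  rfl

end Series

section Rank

/-- The number of elements of `B` below `x`, so that `rankIn B b = j - 1` when `b = b_j` is the
`j`-th smallest element of `B`. -/
def rankIn (B : Finset ℕ) (x : ℕ) : ℕ := Nat.count (· ∈ B) x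

variable {A B : Finset ℕ} {i k n x y z : ℕ}

lemma rankIn_eq_card_filter (B : Finset ℕ) (x : ℕ) : rankIn B x = #{z ∈ B | z < x} := by
  rw [rankIn, Nat.count_eq_card_filter_range]
  congr 1
  ext z
  simp [and_comm]

lemma rankIn_mono (B : Finset ℕ) (hxy : x ≤ y) : rankIn B x ≤ rankIn B y :=
  Nat.count_monotone _ hxy

lemma rankIn_lt_rankIn (hx : x ∈ B) (hxy : x < y) : rankIn B x < rankIn B y :=
  Nat.count_strict_mono hx hxy

lemma lt_of_rankIn_lt (h : rankIn B x < rankIn B y) : x < y := by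
  by_contra! hyx
  exact (rankIn_mono B hyx).not_gt h

lemma lt_of_rankIn_le (hx : x ∈ B) (hy : y ∉ B) (h : rankIn B y ≤ rankIn B x) : y < x := by
  by_contra! hxy
  exact h.not_gt (rankIn_lt_rankIn hx (hxy.lt_of_ne fun heq => hy (heq ▸ hx)))

lemma rankIn_succ (hx : x ∉ B) : rankIn B (x + 1) = rankIn B x := by
  simp [rankIn, Nat.count_succ, hx]

lemma rankIn_lt_self (h0 : 0 ∉ B) (hx : 0 < x) : rankIn B x < x :=
  (Nat.count_le _).lt_of_ne fun h => h0 (Nat.count_iff_forall.1 h 0 hx)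

lemma rankIn_add_card_filter_le (B : Finset ℕ) (x : ℕ) : rankIn B x + #{z ∈ B | x ≤ z} = #B := by
  simpa [rankIn_eq_card_filter] using card_filter_add_card_filter_not (s := B) (· < x)

lemma rankIn_le_card (B : Finset ℕ) (x : ℕ) : rankIn B x ≤ #B :=
  Nat.le.intro (rankIn_add_card_filter_le B x)

lemma rankIn_lt_card (hx : x ∈ B) : rankIn B x < #B := by
  have := rankIn_add_card_filter_le B x
  have : 0 < #{z ∈ B | x ≤ z} := card_pos.2 ⟨x, by simp [hx]⟩
  omega

lemma rankIn_getElem_sort (B : Finset ℕ) (hk : k < B.sort.length) : rankIn B B.sort[k] = k := by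
  have hk' : k < #B := by simpa using hk
  have hlt (hf : (Set.ofPred (· ∈ B)).Finite) : k < #hf.toFinset := by
    convert hk'
    ext; simp
  have hnth : Nat.nth (· ∈ B) k = B.sort[k] := by
    rw [Nat.nth_eq_getD_sort (p := (· ∈ B)) B.finite_toSet]
    simp [hk', Set.ofPred]
  rw [← hnth, rankIn, Nat.count_nth hlt]

lemma exists_mem_rankIn_eq (hk : k < #B) : ∃ x ∈ B, rankIn B x = k := by
  have hk' : k < B.sort.length := by simpa using hk
  exact ⟨B.sort[k], (mem_sort _).1 (List.getElem_mem hk'), rankIn_getElem_sort B hk'⟩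

lemma rankIn_congr (h : ∀ z ∈ B, z < x ↔ z < y) : rankIn B x = rankIn B y := by
  rw [rankIn_eq_card_filter, rankIn_eq_card_filter, filter_congr h]

lemma rankIn_erase_self (B : Finset ℕ) (x : ℕ) : rankIn (B.erase x) x = rankIn B x := by
  rw [rankIn_eq_card_filter, rankIn_eq_card_filter, filter_erase, erase_eq_of_notMem (by simp)]

lemma rankIn_insert (hy : y ∉ A) (z : ℕ) :
    rankIn (insert y A) z = rankIn A z + if y < z then 1 else 0 := by
  simp only [rankIn_eq_card_filter, filter_insert]
  split_ifs <;> simp [hy]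

lemma rankIn_replace_add (hx : x ∈ B) (hy : y ∉ B) (z : ℕ) :
    rankIn (insert y (B.erase x)) z + (if x < z then 1 else 0) =
      rankIn B z + if y < z then 1 else 0 := by
  have hB := rankIn_insert (notMem_erase x B) z
  rw [insert_erase hx] at hB
  rw [rankIn_insert (fun h => hy (mem_of_mem_erase h)), hB]
  omega

lemma card_add_le_rankIn_add (hB : ∀ z ∈ B, z ≤ n) (hx : x ≤ n + 1) :
    #B + x ≤ rankIn B x + (n + 1) := by
  have hge : #{z ∈ B | x ≤ z} ≤ #(Icc x n) := card_le_card fun z hz => by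
    rw [mem_filter] at hz
    exact mem_Icc.2 ⟨hz.2, hB z hz.1⟩
  have := rankIn_add_card_filter_le B x
  rw [Nat.card_Icc] at hge
  omega

lemma le_card_Icc_sdiff_add_rankIn (hk : k ∉ A) : k ≤ #(Icc 1 k \ A) + rankIn A k := by
  have hle : #(Icc 1 k) ≤ #(Icc 1 k \ A ∪ {z ∈ A | z < k}) := card_le_card fun z hz => by
    simp only [mem_union, mem_sdiff, mem_filter]
    grind
  rw [Nat.card_Icc] at hle
  rw [rankIn_eq_card_filter]
  exact hle.trans (card_union_le _ _)

lemma rankIn_add_le_card_Icc_sdiff_add (A : Finset ℕ) (k n : ℕ) :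
    rankIn A k + (n + 1) ≤ #(Icc k n \ A) + #A + k := by
  have hle : #(Icc k n) ≤ #(Icc k n \ A ∪ {z ∈ A | k ≤ z}) := card_le_card fun z hz => by
    simp only [mem_union, mem_sdiff, mem_filter]
    grind
  have := card_union_le (Icc k n \ A) {z ∈ A | k ≤ z}
  have := rankIn_add_card_filter_le A k
  rw [Nat.card_Icc] at hle
  omega

lemma rankIn_image {f : ℕ → ℕ} (hf : StrictMonoOn f B) (hx : x ∈ B) :
    rankIn (B.image f) (f x) = rankIn B x := by
  rw [rankIn_eq_card_filter, rankIn_eq_card_filter, filter_image,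
    card_image_of_injOn (hf.injOn.mono (coe_subset.2 (filter_subset _ B))),
    filter_congr fun z hz => hf.lt_iff_lt hz hx]

end Rank

section Counting

variable {A A' S T : Finset ℕ} {P : Set (Finset ℕ)} {e k l n : ℕ}

lemma ncard_image_insert (h : Disjoint S A) : ((insert · A) '' (S : Set ℕ)).ncard = #S := by
  have hinj := (insert_inj_on A).mono (Set.disjoint_left.1 (disjoint_coe.2 h))
  rw [hinj.ncard_image, Set.ncard_coe_finset]

lemma card_le_ncard_of_insert_mem (hP : P.Finite) (h : ∀ z ∈ S \ A, insert z A ∈ P) :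
    #(S \ A) ≤ P.ncard := by
  rw [← ncard_image_insert sdiff_disjoint]
  exact Set.ncard_le_ncard (Set.image_subset_iff.2 h) hP

lemma card_add_card_le_ncard_add_one (hP : P.Finite) (hne : A ≠ A') (hcard : #A = #A')
    (h : ∀ z ∈ S \ A, insert z A ∈ P) (h' : ∀ z ∈ T \ A', insert z A' ∈ P) :
    #(S \ A) + #(T \ A') ≤ P.ncard + 1 := by
  set F := (insert · A) '' (↑(S \ A) : Set ℕ)
  set G := (insert · A') '' (↑(T \ A') : Set ℕ)
  have hF : F ⊆ P := Set.image_subset_iff.2 h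
  have hG : G ⊆ P := Set.image_subset_iff.2 h'
  have hinter : F ∩ G ⊆ {A ∪ A'} := by
    rintro _ ⟨⟨z, -, rfl⟩, w, -, hzw⟩
    have hsub : A ∪ A' ⊆ insert z A :=
      union_subset (subset_insert z A) ((subset_insert w A').trans hzw.le)
    have hlt : #A < #(A ∪ A') := by
      refine card_lt_card (subset_union_left.ssubset_of_ne fun heq => hne ?_)
      exact (eq_of_subset_of_card_le (union_eq_left.1 heq.symm) hcard.le).symm
    exact (eq_of_subset_of_card_le hsub ((card_insert_le z A).trans hlt)).symm
  have hone := (Set.ncard_le_ncard hinter).trans_eq (Set.ncard_singleton _)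
  have hunion := Set.ncard_le_ncard (Set.union_subset hF hG) hP
  have := Set.ncard_union_add_ncard_inter F G (hP.subset hF) (hP.subset hG)
  rw [ncard_image_insert sdiff_disjoint, ncard_image_insert sdiff_disjoint] at this
  omega

lemma add_rankIn_le_ncard_add (hP : P.Finite) (hne : A ≠ A') (hA : #A = e) (hA' : #A' = e)
    (hk : k ∉ A) (h : ∀ z ∈ Icc 1 k \ A, insert z A ∈ P)
    (h' : ∀ z ∈ Icc l n \ A', insert z A' ∈ P) :
    n + k + rankIn A' l ≤ P.ncard + e + l + rankIn A k := by
  have hlow := le_card_Icc_sdiff_add_rankIn hk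
  have hupp := rankIn_add_le_card_Icc_sdiff_add A' l n
  have := card_add_card_le_ncard_add_one hP hne (hA.trans hA'.symm) h h'
  omega

end Counting

section Compressed

/-- Exchanging `x ∈ B` for `y` moves one element of `B` towards `S_{n,d,i}`: downwards if `x` is
among the `i` smallest elements of `B`, upwards otherwise. -/
def IsOutward (i : ℕ) (B : Finset ℕ) (x y : ℕ) : Prop :=
  (rankIn B x < i ∧ y < x) ∨ (i ≤ rankIn B x ∧ x < y)

/-- A family of `d`-subsets of `[n]` closed under outward exchanges: the counterpart of a
`(d,i)`-Ferrers diagram, which is what `g_{n,d,i}` turns it into. -/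
structure IsCompressed (n d i : ℕ) (P : Set (Finset ℕ)) : Prop where
  subset_Icc : ∀ B ∈ P, B ⊆ Icc 1 n
  card_eq : ∀ B ∈ P, #B = d
  replace_mem : ∀ B ∈ P, ∀ x ∈ B, ∀ y ∈ Icc 1 n, y ∉ B → IsOutward i B x y →
    insert y (B.erase x) ∈ P

variable {B B' : Finset ℕ} {P : Set (Finset ℕ)} {n d i a b x y z : ℕ}

lemma IsOutward.rankIn_replace_lt_iff (h : IsOutward i B x y) (hx : x ∈ B) (hy : y ∉ B)
    (hz : z ∈ B.erase x) : rankIn (insert y (B.erase x)) z < i ↔ rankIn B z < i := by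
  have hrank := rankIn_replace_add hx hy z
  obtain ⟨hzx, hz⟩ := mem_erase.1 hz
  rcases lt_or_gt_of_ne hzx with hlt | hlt
  · have := rankIn_lt_rankIn hz hlt
    rcases h with h | h <;> split_ifs at hrank <;> omega
  · have := rankIn_lt_rankIn hx hlt
    rcases h with h | h <;> split_ifs at hrank <;> omega

lemma IsOutward.rankIn_replace_self_lt_iff (h : IsOutward i B x y) (hx : x ∈ B) (hy : y ∉ B) :
    rankIn (insert y (B.erase x)) y < i ↔ rankIn B x < i := by
  have hrank := rankIn_replace_add hx hy y
  rcases h with ⟨hi, hyx⟩ | ⟨hi, hxy⟩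
  · have := rankIn_mono B hyx.le
    split_ifs at hrank <;> omega
  · have := rankIn_lt_rankIn hx hxy
    split_ifs at hrank <;> omega

namespace IsCompressed

lemma finite (h : IsCompressed n d i P) : P.Finite :=
  (Icc 1 n).powerset.finite_toSet.subset fun B hB =>
    mem_coe.2 (mem_powerset.2 (h.subset_Icc B hB))

lemma insert_mem_of_rankIn_lt (h : IsCompressed n d i P) (hB : B ∈ P) (hx : x ∈ B)
    (hi : rankIn B x < i) : ∀ z ∈ Icc 1 x \ B.erase x, insert z (B.erase x) ∈ P := by
  intro z hz
  have := h.subset_Icc B hB hx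
  rcases eq_or_ne z x with rfl | hzx
  · rwa [insert_erase hx]
  · simp only [mem_sdiff, mem_Icc, mem_erase] at this hz
    exact h.replace_mem B hB x hx z (mem_Icc.2 (by omega)) (by tauto) (.inl (by omega))

lemma insert_mem_of_le_rankIn (h : IsCompressed n d i P) (hB : B ∈ P) (hx : x ∈ B)
    (hi : i ≤ rankIn B x) : ∀ z ∈ Icc x n \ B.erase x, insert z (B.erase x) ∈ P := by
  intro z hz
  have := h.subset_Icc B hB hx
  rcases eq_or_ne z x with rfl | hzx
  · rwa [insert_erase hx]
  · simp only [mem_sdiff, mem_Icc, mem_erase] at this hz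
    exact h.replace_mem B hB x hx z (mem_Icc.2 (by omega)) (by tauto) (.inr (by omega))

lemma lt_ncard_add (h : IsCompressed n d i P) (hB : B ∈ P) (ha : a ∈ B) (hi : rankIn B a < i) :
    a < P.ncard + d := by
  have hfill := card_le_ncard_of_insert_mem h.finite (h.insert_mem_of_rankIn_lt hB ha hi)
  have := le_card_Icc_sdiff_add_rankIn (notMem_erase a B)
  have hlt := rankIn_lt_card ha
  rw [h.card_eq B hB] at hlt
  rw [rankIn_erase_self] at this
  omega

lemma add_one_lt_ncard_add (h : IsCompressed n d i P) (hB : B ∈ P) (hb : b ∈ B)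
    (hi : i ≤ rankIn B b) : n + 1 < P.ncard + d + b := by
  have hfill := card_le_ncard_of_insert_mem h.finite (h.insert_mem_of_le_rankIn hB hb hi)
  have := rankIn_add_le_card_Icc_sdiff_add (B.erase b) b n
  have := card_erase_add_one hb
  rw [h.card_eq B hB] at this
  omega

lemma add_add_one_lt_ncard_add (h : IsCompressed n d i P) (hB : B ∈ P) (hB' : B' ∈ P)
    (ha : a ∈ B) (hia : rankIn B a < i) (hb : b ∈ B') (hib : i ≤ rankIn B' b)
    (hne : B.erase a ≠ B'.erase b) : n + a + 1 < P.ncard + d + b := by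
  have hcard {C : Finset ℕ} (hC : C ∈ P) {c : ℕ} (hc : c ∈ C) : #(C.erase c) = d - 1 := by
    rw [card_erase_of_mem hc, h.card_eq C hC]
  have hd : 0 < d := h.card_eq B hB ▸ card_pos.2 ⟨a, ha⟩
  have := add_rankIn_le_ncard_add h.finite hne (hcard hB ha) (hcard hB' hb) (notMem_erase a B)
    (h.insert_mem_of_rankIn_lt hB ha hia) (h.insert_mem_of_le_rankIn hB' hb hib)
  rw [rankIn_erase_self, rankIn_erase_self] at this
  omega

end IsCompressed

end Compressed

section Aligned

variable {A B B' : Finset ℕ} {P : Set (Finset ℕ)} {τ : Finset ℕ → Bool} {n d p i k x y : ℕ}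

lemma IsLowerSeries.insert_mem (h : IsLowerSeries n P (B.erase k)) (hB : B ∈ P)
    (hk : k ∈ B) (hkn : k ∈ Icc 1 n) : ∀ z ∈ Icc 1 k \ B.erase k, insert z (B.erase k) ∈ P := by
  intro z hz
  rw [mem_sdiff, mem_Icc] at hz
  rw [mem_Icc] at hkn
  rcases hz.1.2.eq_or_lt with rfl | hzk
  · rwa [insert_erase hk]
  · exact h z (mem_sdiff.2 ⟨mem_Icc.2 ⟨hz.1.1, by omega⟩, hz.2⟩) k
      (mem_sdiff.2 ⟨mem_Icc.2 hkn, notMem_erase k B⟩) hzk (by rwa [insert_erase hk])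

lemma IsUpperSeries.insert_mem (h : IsUpperSeries n P (B.erase k)) (hB : B ∈ P)
    (hk : k ∈ B) (hkn : k ∈ Icc 1 n) : ∀ z ∈ Icc k n \ B.erase k, insert z (B.erase k) ∈ P := by
  intro z hz
  rw [mem_sdiff, mem_Icc] at hz
  rw [mem_Icc] at hkn
  rcases hz.1.1.eq_or_lt with rfl | hkz
  · rwa [insert_erase hk]
  · exact h k (mem_sdiff.2 ⟨mem_Icc.2 hkn, notMem_erase k B⟩) z
      (mem_sdiff.2 ⟨mem_Icc.2 ⟨by omega, hz.1.2⟩, hz.2⟩) hkz (by rwa [insert_erase hk])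

lemma eq_of_isLowerSeries_of_isUpperSeries (hP : P.Finite) (hPn : P.ncard + d ≤ n)
    (hB : B ∈ P) (hB' : B' ∈ P) (hd : #B = d) (hd' : #B' = d) (hk : k ∈ B) (hk' : k ∈ B')
    (hkn : k ∈ Icc 1 n) (hrank : rankIn B k = rankIn B' k) (hlow : IsLowerSeries n P (B.erase k))
    (hupp : IsUpperSeries n P (B'.erase k)) : B = B' := by
  by_contra hne
  have hne' : B.erase k ≠ B'.erase k := fun heq =>
    hne (by rw [← insert_erase hk, heq, insert_erase hk'])
  have hcount := add_rankIn_le_ncard_add hP hne' (card_erase_of_mem hk)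
    ((card_erase_of_mem hk').trans (by rw [hd, hd'])) (notMem_erase k B)
    (hlow.insert_mem hB hk hkn) (hupp.insert_mem hB' hk' hkn)
  rw [rankIn_erase_self, rankIn_erase_self] at hcount
  have := card_pos.2 ⟨k, hk⟩
  omega

/-- The series at the faces of `B` point outwards: the `k`-th one is lower for the `i` smallest
elements `k` of `B` and upper for the others. -/
def IsAligned (n i : ℕ) (P : Set (Finset ℕ)) (B : Finset ℕ) : Prop :=
  ∀ k ∈ B, (rankIn B k < i → IsLowerSeries n P (B.erase k)) ∧
    (i ≤ rankIn B k → IsUpperSeries n P (B.erase k))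

lemma sourceSubset_subset_Icc (hid : i ≤ d) (hdn : d ≤ n) :
    sourceSubset n d i ⊆ Icc 1 n := fun z => by
  simp only [sourceSubset, mem_union, mem_Icc]
  omega

lemma card_sourceSubset (hid : i ≤ d) (hdn : d ≤ n) : #(sourceSubset n d i) = d := by
  have hdisj : Disjoint (Icc 1 i) (Icc (n - d + i + 1) n) := disjoint_left.2 fun z => by
    simp only [mem_Icc]
    omega
  rw [sourceSubset, card_union_of_disjoint hdisj, Nat.card_Icc, Nat.card_Icc]
  omega

lemma rankIn_sourceSubset_lt_iff (hid : i ≤ d) (hdn : d ≤ n) (hk : k ∈ sourceSubset n d i) :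
    rankIn (sourceSubset n d i) k < i ↔ k ≤ i := by
  have hsub := sourceSubset_subset_Icc hid hdn
  have hkn := mem_Icc.1 (hsub hk)
  have hlow := rankIn_lt_self (fun h0 => by simpa using hsub h0) hkn.1
  have hupp := card_add_le_rankIn_add (fun z hz => (mem_Icc.1 (hsub hz)).2) (hkn.2.trans n.le_succ)
  rw [card_sourceSubset hid hdn] at hupp
  simp only [sourceSubset, mem_union, mem_Icc] at hk
  omega

lemma IsUpperSeries.isLowerSeries_of_forall_le (h : IsUpperSeries n P A)
    (hk : k ∈ Icc 1 n \ A) (hkP : insert k A ∈ P) (hmin : ∀ z ∈ Icc 1 n \ A, k ≤ z) :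
    IsLowerSeries n P A := by
  intro x hx _ _ _ _
  rcases (hmin x hx).eq_or_lt with rfl | hkx
  · exact hkP
  · exact h k hk x hx hkx hkP

lemma IsLowerSeries.isUpperSeries_of_forall_ge (h : IsLowerSeries n P A)
    (hk : k ∈ Icc 1 n \ A) (hkP : insert k A ∈ P) (hmax : ∀ z ∈ Icc 1 n \ A, z ≤ k) :
    IsUpperSeries n P A := by
  intro _ _ y hy _ _
  rcases (hmax y hy).eq_or_lt with rfl | hyk
  · exact hkP
  · exact h y hy k hk hyk hkP

namespace IsCoSignotope

lemma finite (hτ : IsCoSignotope n d τ) : (plusSet τ).Finite :=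
  (Icc 1 n).powerset.finite_toSet.subset fun B hB =>
    mem_coe.2 (mem_powerset.2 (hτ.1 B hB).1)

lemma isLowerSeries_or_isUpperSeries (hτ : IsCoSignotope n d τ) (hB : B ∈ plusSet τ)
    (hk : k ∈ B) :
    IsLowerSeries n (plusSet τ) (B.erase k) ∨ IsUpperSeries n (plusSet τ) (B.erase k) :=
  (signChanges_series_le_one_iff n τ _).1 (hτ.2 B (hτ.1 B hB).1 (hτ.1 B hB).2 k hk)

lemma isAligned_sourceSubset (hτ : IsCoSignotope n d τ) (hid : i ≤ d) (hdn : d ≤ n)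
    (hS : sourceSubset n d i ∈ plusSet τ) :
    IsAligned n i (plusSet τ) (sourceSubset n d i) := by
  intro k hk
  have hkn := sourceSubset_subset_Icc hid hdn hk
  have hkC : k ∈ Icc 1 n \ (sourceSubset n d i).erase k :=
    mem_sdiff.2 ⟨hkn, notMem_erase k _⟩
  have hS' := hS
  rw [← insert_erase hk] at hS'
  have hnotMem {z : ℕ} (hz : z ∈ Icc 1 n \ (sourceSubset n d i).erase k) :
      z = k ∨ i < z ∧ z < n - d + i + 1 := by
    simp only [sourceSubset, mem_sdiff, mem_erase, mem_union, mem_Icc] at hz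
    omega
  have hmem := hk
  simp only [sourceSubset, mem_union, mem_Icc] at hmem
  constructor <;> intro hi
  · rw [rankIn_sourceSubset_lt_iff hid hdn hk] at hi
    refine (hτ.isLowerSeries_or_isUpperSeries hS hk).elim id fun h => ?_
    refine h.isLowerSeries_of_forall_le hkC hS' fun z hz => ?_
    have := hnotMem hz
    omega
  · rw [← not_lt, rankIn_sourceSubset_lt_iff hid hdn hk] at hi
    refine (hτ.isLowerSeries_or_isUpperSeries hS hk).elim (fun h => ?_) id
    refine h.isUpperSeries_of_forall_ge hkC hS' fun z hz => ?_
    have := hnotMem hz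
    omega

lemma isAligned_replace (hτ : IsCoSignotope n d τ) (hcount : plusCount τ + d ≤ n)
    (hB : IsAligned n i (plusSet τ) B) (hBP : B ∈ plusSet τ)
    (hBP' : insert y (B.erase x) ∈ plusSet τ) (hx : x ∈ B) (hy : y ∉ B)
    (hxy : ∀ z ∈ B.erase x, ¬(min x y < z ∧ z < max x y)) :
    IsAligned n i (plusSet τ) (insert y (B.erase x)) := by
  have hlt (z : ℕ) (hz : z ∈ B.erase x) : z < y ↔ z < x := by
    have := hxy z hz
    have : z ≠ x ∧ z ≠ y := by grind
    omega
  intro k hk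
  rcases mem_insert.1 hk with rfl | hkB
  · have hyx : k ∉ B.erase x := fun h => hy (mem_of_mem_erase h)
    have hrank := rankIn_insert hyx k
    rw [rankIn_congr hlt, rankIn_erase_self, if_neg (lt_irrefl k), add_zero] at hrank
    rw [hrank, erase_insert hyx]
    exact hB x hx
  · have hrank : rankIn (insert y (B.erase x)) k = rankIn B k := by
      have := rankIn_replace_add hx hy k
      have := hlt k hkB
      have : k ≠ x ∧ k ≠ y := by grind
      split_ifs at * <;> omega
    have hkB' := mem_of_mem_erase hkB
    have hne : B ≠ insert y (B.erase x) := fun h => hy (h ▸ mem_insert_self y _)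
    rw [hrank]
    have hkn := (hτ.1 B hBP).1 hkB'
    constructor
    · intro hi
      refine (hτ.isLowerSeries_or_isUpperSeries hBP' hk).resolve_right fun hupp => hne ?_
      exact eq_of_isLowerSeries_of_isUpperSeries hτ.finite hcount hBP hBP' (hτ.1 _ hBP).2
        (hτ.1 _ hBP').2 hkB' hk hkn hrank.symm ((hB k hkB').1 hi) hupp
    · intro hi
      refine (hτ.isLowerSeries_or_isUpperSeries hBP' hk).resolve_left fun hlow => hne.symm ?_
      exact eq_of_isLowerSeries_of_isUpperSeries hτ.finite hcount hBP' hBP (hτ.1 _ hBP').2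
        (hτ.1 _ hBP).2 hk hkB' hkn hrank hlow ((hB k hkB').2 hi)

lemma isAligned_of_mem_comp (hτ : IsCoSignotope n d τ) (hcount : plusCount τ + d ≤ n)
    (hid : i ≤ d) (hB : B ∈ comp n d τ i) : IsAligned n i (plusSet τ) B := by
  obtain ⟨hS, -, hconn⟩ := hB
  induction hconn with
  | refl => exact hτ.isAligned_sourceSubset hid (by omega) hS
  | tail _ hstep ih =>
    obtain ⟨hB, hB', -, -, -, -, x, hx, y, -, hy, rfl, hxy⟩ := hstep
    exact hτ.isAligned_replace hcount ih hB hB' hx hy hxy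

end IsCoSignotope

lemma isCompressed_of_mem_coSigOnly (hid : i ≤ d) (hpn : p + d ≤ n)
    (hτ : τ ∈ coSigOnly n d p i) : IsCompressed n d i (plusSet τ) := by
  obtain ⟨hco, rfl, hcomp⟩ := hτ
  refine ⟨fun B hB => (hco.1 B hB).1, fun B hB => (hco.1 B hB).2, ?_⟩
  intro B hB x hx y hyn hy hxy
  have hxC : x ∈ Icc 1 n \ B.erase x := mem_sdiff.2 ⟨(hco.1 B hB).1 hx, notMem_erase x B⟩
  have hyC : y ∈ Icc 1 n \ B.erase x := mem_sdiff.2 ⟨hyn, fun h => hy (mem_of_mem_erase h)⟩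
  have hBx : insert x (B.erase x) ∈ plusSet τ := by rwa [insert_erase hx]
  have hB := hco.isAligned_of_mem_comp hpn hid (hcomp B hB) x hx
  rcases hxy with ⟨hi, hyx⟩ | ⟨hi, hxy⟩
  · exact hB.1 hi y hyC x hxC hyx hBx
  · exact hB.2 hi x hxC y hyC hxy hBx

end Aligned

section Characterization

variable {A B B' : Finset ℕ} {P : Set (Finset ℕ)} {τ : Finset ℕ → Bool} {n d i p x y : ℕ}

lemma GAdj.symm (h : GAdj n d B B') : GAdj n d B' B := by
  obtain ⟨hB, hd, hB', hd', x, hx, y, -, hy, rfl, hxy⟩ := h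
  have hy' : y ∉ B.erase x := fun h => hy (mem_of_mem_erase h)
  have hne : x ≠ y := fun h => hy (h ▸ hx)
  refine ⟨hB', hd', hB, hd, y, mem_insert_self y _, x, hB hx, by simp [hne], ?_, ?_⟩
  · rw [erase_insert hy', insert_erase hx]
  · rwa [erase_insert hy', min_comm, max_comm]

lemma exists_isOutward_adjacent (hid : i ≤ d) (hB : B ⊆ Icc 1 n) (hd : #B = d)
    (hne : B ≠ sourceSubset n d i) : ∃ x ∈ B, ∃ y ∈ Icc 1 n, y ∉ B ∧ IsOutward i B x y ∧
      ∀ z ∈ B, ¬(min x y < z ∧ z < max x y) := by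
  have hdn : d ≤ n := by simpa [hd] using card_le_card hB
  obtain ⟨y, hyS, hy⟩ : ∃ y ∈ sourceSubset n d i, y ∉ B := by
    by_contra! hsub
    exact hne (eq_of_subset_of_card_le hsub (by rw [hd, card_sourceSubset hid hdn])).symm
  have hyn := sourceSubset_subset_Icc hid hdn hyS
  have hpos := (mem_Icc.1 hyn).1
  have hle := (mem_Icc.1 hyn).2
  rw [sourceSubset, mem_union, mem_Icc, mem_Icc] at hyS
  rcases hyS with hyi | hyi
  · have hlow := rankIn_lt_self (fun h0 => by simpa using hB h0) hpos
    obtain ⟨x, hx, hxy⟩ := exists_mem_rankIn_eq (B := B) (k := rankIn B y) (by omega)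
    have hyx := lt_of_rankIn_le hx hy hxy.ge
    refine ⟨x, hx, y, hyn, hy, .inl ⟨by omega, hyx⟩, fun z hz hzxy => ?_⟩
    have := rankIn_lt_rankIn (B := B) (x := z) (y := x) hz (by omega)
    have := rankIn_mono B (x := y) (y := z) (by omega)
    omega
  · have hupp := card_add_le_rankIn_add (x := y + 1) (fun z hz => (mem_Icc.1 (hB hz)).2) (by omega)
    rw [rankIn_succ hy] at hupp
    have := rankIn_le_card B y
    obtain ⟨x, hx, hxy⟩ := exists_mem_rankIn_eq (B := B) (k := rankIn B y - 1) (by omega)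
    have hyx : x < y := lt_of_rankIn_lt (B := B) (by omega)
    refine ⟨x, hx, y, hyn, hy, .inr ⟨by omega, hyx⟩, fun z hz hzxy => ?_⟩
    have := rankIn_lt_rankIn (B := B) (x := x) (y := z) hx (by omega)
    have := rankIn_lt_rankIn (B := B) (x := z) (y := y) hz (by omega)
    omega

/-- The total distance of the `i` smallest elements of `B` from `0` and of the others from `n`. -/
def innerWeight (n i : ℕ) (B : Finset ℕ) : ℕ :=
  ∑ x ∈ B, if rankIn B x < i then x else n - x

lemma IsOutward.innerWeight_lt (h : IsOutward i B x y) (hx : x ∈ B) (hy : y ∉ B) (hyn : y ≤ n) :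
    innerWeight n i (insert y (B.erase x)) < innerWeight n i B := by
  have hrest : ∑ z ∈ B.erase x, (if rankIn (insert y (B.erase x)) z < i then z else n - z) =
      ∑ z ∈ B.erase x, if rankIn B z < i then z else n - z :=
    sum_congr rfl fun z hz => by simp only [h.rankIn_replace_lt_iff hx hy hz]
  rw [innerWeight, innerWeight, sum_insert fun h => hy (mem_of_mem_erase h), hrest,
    ← add_sum_erase B _ hx]
  simp only [h.rankIn_replace_self_lt_iff hx hy]
  refine Nat.add_lt_add_right ?_ _
  rcases h with ⟨hi, hyx⟩ | ⟨hi, hxy⟩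
  · rwa [if_pos hi, if_pos hi]
  · rw [if_neg hi.not_gt, if_neg hi.not_gt]
    omega

namespace IsCompressed

lemma mem_comp (h : IsCompressed n d i (plusSet τ)) (hid : i ≤ d) {B : Finset ℕ}
    (hB : B ∈ plusSet τ) : B ∈ comp n d τ i := by
  induction hw : innerWeight n i B using Nat.strong_induction_on generalizing B with
  | _ w ih =>
    have hsub := h.subset_Icc B hB
    have hcard := h.card_eq B hB
    by_cases hBS : B = sourceSubset n d i
    · subst hBS
      exact ⟨hB, hB, .refl⟩
    · obtain ⟨x, hx, y, hyn, hy, hout, hxy⟩ := exists_isOutward_adjacent hid hsub hcard hBS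
      have hB' := h.replace_mem B hB x hx y hyn hy hout
      have hlt := hout.innerWeight_lt hx hy (mem_Icc.1 hyn).2
      obtain ⟨hS, -, hconn⟩ := ih _ (hw ▸ hlt) hB' rfl
      have hadj : GAdj n d B (insert y (B.erase x)) :=
        ⟨hsub, hcard, h.subset_Icc _ hB', h.card_eq _ hB', x, hx, y, hyn, hy, rfl,
          fun z hz => hxy z (mem_of_mem_erase hz)⟩
      exact ⟨hS, hB, hconn.tail ⟨hB', hB, hadj.symm⟩⟩

lemma le_rankIn_of_not_isLowerSeries (h : IsCompressed n d i P) (hA : ¬IsLowerSeries n P A) :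
    ∃ y ∉ A, insert y A ∈ P ∧ i ≤ rankIn A y := by
  simp only [IsLowerSeries, not_forall] at hA
  obtain ⟨x, hx, y, hy, hxy, hyP, hxP⟩ := hA
  rw [mem_sdiff] at hx hy
  refine ⟨y, hy.2, hyP, not_lt.1 fun hi => hxP ?_⟩
  rw [← erase_insert hy.2]
  refine h.replace_mem _ hyP y (mem_insert_self y A) x hx.1 ?_ (.inl ⟨?_, hxy⟩)
  · simp [hxy.ne, hx.2]
  · simpa [rankIn_insert hy.2] using hi

lemma rankIn_lt_of_not_isUpperSeries (h : IsCompressed n d i P) (hA : ¬IsUpperSeries n P A) :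
    ∃ x ∉ A, insert x A ∈ P ∧ rankIn A x < i := by
  simp only [IsUpperSeries, not_forall] at hA
  obtain ⟨x, hx, y, hy, hxy, hxP, hyP⟩ := hA
  rw [mem_sdiff] at hx hy
  refine ⟨x, hx.2, hxP, not_le.1 fun hi => hyP ?_⟩
  rw [← erase_insert hx.2]
  refine h.replace_mem _ hxP x (mem_insert_self x A) y hy.1 ?_ (.inr ⟨?_, hxy⟩)
  · simp [hxy.ne', hy.2]
  · simpa [rankIn_insert hx.2] using hi

lemma isLowerSeries_or_isUpperSeries (h : IsCompressed n d i P) (hPn : P.ncard + d ≤ n)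
    (A : Finset ℕ) : IsLowerSeries n P A ∨ IsUpperSeries n P A := by
  by_contra! hA
  obtain ⟨y, hy, hyP, hiy⟩ := h.le_rankIn_of_not_isLowerSeries hA.1
  obtain ⟨x, hx, hxP, hxi⟩ := h.rankIn_lt_of_not_isUpperSeries hA.2
  have := rankIn_le_card A y
  obtain ⟨c, hc, hci⟩ := exists_mem_rankIn_eq (B := A) (k := i - 1) (by omega)
  have hxc : x < c := lt_of_rankIn_le hc hx (by omega)
  have hcy : c < y := lt_of_rankIn_lt (B := A) (by omega)
  have hne : (insert y A).erase c ≠ (insert x A).erase c := by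
    intro heq
    have : y ∈ (insert x A).erase c := heq ▸ by simp [hcy.ne']
    simp [hy, (hxc.trans hcy).ne'] at this
  have := h.add_add_one_lt_ncard_add hyP hxP (mem_insert_of_mem hc)
    (by rw [rankIn_insert hy, if_neg hcy.not_gt]; omega) (mem_insert_of_mem hc)
    (by rw [rankIn_insert hx, if_pos hxc]; omega) hne
  omega

end IsCompressed

lemma mem_coSigOnly_iff (hid : i ≤ d) (hpn : p + d ≤ n) :
    τ ∈ coSigOnly n d p i ↔ IsCompressed n d i (plusSet τ) ∧ plusCount τ = p := by
  refine ⟨fun h => ⟨isCompressed_of_mem_coSigOnly hid hpn h, h.2.1⟩, ?_⟩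
  rintro ⟨h, rfl⟩
  refine ⟨⟨fun A hA => ⟨h.subset_Icc A hA, h.card_eq A hA⟩, fun B _ _ b _ => ?_⟩, rfl,
    fun B hB => h.mem_comp hid hB⟩
  exact (signChanges_series_le_one_iff n τ _).2 (h.isLowerSeries_or_isUpperSeries hpn _)

end Characterization

section Shift

variable {B : Finset ℕ} {P : Set (Finset ℕ)} {τ ρ : Finset ℕ → Bool} {n tn d i p q x y : ℕ}

/-- The `k`-th smallest element `x` of `B` is kept if `k ≤ i` and shifted by `tn - n` otherwise,
as `gammaSet` does. The truncated subtraction is harmless on members of small compressed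
families. -/
def shift (n tn i : ℕ) (B : Finset ℕ) (x : ℕ) : ℕ :=
  if rankIn B x < i then x else x + tn - n

lemma gammaSet_eq_image (n tn i : ℕ) (B : Finset ℕ) :
    gammaSet n tn i B = B.image (shift n tn i B) := by
  ext z
  rw [gammaSet, List.mem_toFinset, List.mem_mapIdx, mem_image]
  constructor
  · rintro ⟨k, hk, rfl⟩
    exact ⟨B.sort[k], (mem_sort _).1 (List.getElem_mem hk), by
      rw [shift, rankIn_getElem_sort]⟩
  · rintro ⟨x, hx, rfl⟩
    obtain ⟨k, hk, rfl⟩ := List.getElem_of_mem ((mem_sort (· ≤ ·)).2 hx)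
    exact ⟨k, hk, by rw [shift, rankIn_getElem_sort]⟩

lemma IsOutward.gammaSet_replace (h : IsOutward i B x y) (hx : x ∈ B) (hy : y ∉ B)
    (hinj : Set.InjOn (shift n tn i B) B) :
    gammaSet n tn i (insert y (B.erase x)) =
      insert (if rankIn B x < i then y else y + tn - n)
        ((gammaSet n tn i B).erase (shift n tn i B x)) := by
  have hrest : (B.erase x).image (shift n tn i (insert y (B.erase x))) =
      (B.erase x).image (shift n tn i B) :=
    image_congr fun z hz => by simp only [shift, h.rankIn_replace_lt_iff hx hy hz]
  have herase : (B.erase x).image (shift n tn i B) =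
      (B.image (shift n tn i B)).erase (shift n tn i B x) := by
    rw [erase_eq, image_sdiff_of_injOn hinj (singleton_subset_iff.2 hx), image_singleton,
      ← erase_eq]
  simp only [gammaSet_eq_image, image_insert, hrest, herase, shift,
    h.rankIn_replace_self_lt_iff hx hy]

namespace IsCompressed

lemma strictMonoOn_shift (h : IsCompressed n d i P) (hPtn : P.ncard + d ≤ tn) (hB : B ∈ P) :
    StrictMonoOn (shift n tn i B) B := by
  intro x hx y hy hxy
  have hrank := rankIn_lt_rankIn hx hxy
  simp only [shift]
  split_ifs with hxi hyi hyi
  · exact hxy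
  · have hne : B.erase x ≠ B.erase y := fun heq => hxy.ne ((erase_inj B hx).1 heq)
    have := h.add_add_one_lt_ncard_add hB hB hx hxi hy (not_lt.1 hyi) hne
    omega
  · omega
  · have := h.add_one_lt_ncard_add hB hx (not_lt.1 hxi)
    omega

lemma rankIn_gammaSet_shift (h : IsCompressed n d i P) (hPtn : P.ncard + d ≤ tn) (hB : B ∈ P)
    (hx : x ∈ B) : rankIn (gammaSet n tn i B) (shift n tn i B x) = rankIn B x := by
  rw [gammaSet_eq_image]
  exact rankIn_image (h.strictMonoOn_shift hPtn hB) hx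

lemma shift_shift (h : IsCompressed n d i P) (hPtn : P.ncard + d ≤ tn) (hB : B ∈ P)
    (hx : x ∈ B) : shift tn n i (gammaSet n tn i B) (shift n tn i B x) = x := by
  rw [shift, h.rankIn_gammaSet_shift hPtn hB hx]
  split_ifs with hi
  · rw [shift, if_pos hi]
  · have := h.add_one_lt_ncard_add hB hx (not_lt.1 hi)
    rw [shift, if_neg hi]
    omega

lemma leftInvOn_gammaSet (h : IsCompressed n d i P) (hPtn : P.ncard + d ≤ tn) :
    Set.LeftInvOn (gammaSet tn n i) (gammaSet n tn i) P := by
  intro B hB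
  rw [gammaSet_eq_image tn, gammaSet_eq_image n, image_image]
  conv_rhs => rw [← image_id (s := B)]
  refine image_congr fun x hx => ?_
  rw [← gammaSet_eq_image]
  exact h.shift_shift hPtn hB hx

lemma shift_mem_Icc (h : IsCompressed n d i P) (hPtn : P.ncard + d ≤ tn) (hB : B ∈ P)
    (hx : x ∈ B) : shift n tn i B x ∈ Icc 1 tn := by
  have hxn := mem_Icc.1 (h.subset_Icc B hB hx)
  rw [shift, mem_Icc]
  split_ifs with hi
  · have := h.lt_ncard_add hB hx hi
    omega
  · have := h.add_one_lt_ncard_add hB hx (not_lt.1 hi)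
    omega

lemma gammaSet_subset_Icc (h : IsCompressed n d i P) (hPtn : P.ncard + d ≤ tn) (hB : B ∈ P) :
    gammaSet n tn i B ⊆ Icc 1 tn := by
  rw [gammaSet_eq_image, image_subset_iff]
  exact fun x hx => h.shift_mem_Icc hPtn hB hx

lemma card_gammaSet (h : IsCompressed n d i P) (hPtn : P.ncard + d ≤ tn) (hB : B ∈ P) :
    #(gammaSet n tn i B) = d := by
  rw [gammaSet_eq_image, card_image_of_injOn (h.strictMonoOn_shift hPtn hB).injOn,
    h.card_eq B hB]

lemma exists_isOutward_of_gammaSet (h : IsCompressed n d i P) (hPtn : P.ncard + d ≤ tn)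
    (hB : B ∈ P) (hx : x ∈ B) {y' : ℕ} (hyn : y' ∈ Icc 1 tn) (hy : y' ∉ gammaSet n tn i B)
    (hout : IsOutward i (gammaSet n tn i B) (shift n tn i B x) y') :
    ∃ y ∈ Icc 1 n, y ∉ B ∧ IsOutward i B x y ∧
      (if rankIn B x < i then y else y + tn - n) = y' := by
  have hxn := mem_Icc.1 (h.subset_Icc B hB hx)
  rw [mem_Icc] at hyn
  have hshift_ne (z : ℕ) (hz : z ∈ B) : shift n tn i B z ≠ y' := fun hzy =>
    hy (gammaSet_eq_image n tn i B ▸ hzy ▸ mem_image_of_mem _ hz)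
  rw [IsOutward, h.rankIn_gammaSet_shift hPtn hB hx, shift] at hout
  rcases hout with ⟨hi, hlt⟩ | ⟨hi, hlt⟩
  · rw [if_pos hi] at hlt
    refine ⟨y', mem_Icc.2 (by omega), fun hy => hshift_ne y' hy ?_, .inl ⟨hi, hlt⟩, if_pos hi⟩
    exact if_pos ((rankIn_lt_rankIn hy hlt).trans hi)
  · rw [if_neg hi.not_gt] at hlt
    have hxy : x < y' + n - tn := by omega
    have hback : y' + n - tn + tn - n = y' := by omega
    refine ⟨y' + n - tn, mem_Icc.2 (by omega), fun hy => hshift_ne _ hy ?_, .inr ⟨hi, hxy⟩, ?_⟩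
    · rwa [shift, if_neg (hi.trans (rankIn_lt_rankIn hx hxy).le).not_gt]
    · rwa [if_neg hi.not_gt]

lemma image_gammaSet (h : IsCompressed n d i P) (hPtn : P.ncard + d ≤ tn) :
    IsCompressed tn d i (gammaSet n tn i '' P) := by
  refine ⟨Set.forall_mem_image.2 fun B hB => h.gammaSet_subset_Icc hPtn hB,
    Set.forall_mem_image.2 fun B hB => h.card_gammaSet hPtn hB, ?_⟩
  rintro _ ⟨B, hB, rfl⟩ _ hx' y' hyn' hy' hout'
  obtain ⟨x, hx, rfl⟩ := mem_image.1 (gammaSet_eq_image n tn i B ▸ hx')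
  obtain ⟨y, hyn, hy, hout, rfl⟩ := h.exists_isOutward_of_gammaSet hPtn hB hx hyn' hy' hout'
  rw [← hout.gammaSet_replace hx hy (h.strictMonoOn_shift hPtn hB).injOn]
  exact Set.mem_image_of_mem _ (h.replace_mem B hB x hx y hyn hy hout)

end IsCompressed

lemma plusSet_ofPlusSet (S : Set (Finset ℕ)) : plusSet (ofPlusSet S) = S := by
  ext A
  simp [ofPlusSet]

lemma plusSet_hFun (n tn i : ℕ) (τ : Finset ℕ → Bool) :
    plusSet (hFun n tn i τ) = gammaSet n tn i '' plusSet τ := by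
  rw [hFun, plusSet_ofPlusSet]
  ext A
  simp only [Set.mem_ofPred_eq, Set.mem_image, eq_comm (a := A)]

lemma plusSet_injective : Function.Injective plusSet := fun _ _ h =>
  funext fun A => Bool.eq_iff_iff.2 (Set.ext_iff.1 h A)

lemma injOn_gammaSet (hid : i ≤ d) (hpn : p + d ≤ n) (hptn : p + d ≤ tn)
    (hτ : τ ∈ coSigOnly n d p i) : Set.InjOn (gammaSet n tn i) (plusSet τ) := by
  obtain ⟨h, rfl⟩ := (mem_coSigOnly_iff hid hpn).1 hτ
  exact (h.leftInvOn_gammaSet hptn).injOn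

lemma plusCount_hFun (hid : i ≤ d) (hpn : p + d ≤ n) (hptn : p + d ≤ tn)
    (hτ : τ ∈ coSigOnly n d p i) : plusCount (hFun n tn i τ) = plusCount τ := by
  change (plusSet (hFun n tn i τ)).ncard = _
  rw [plusSet_hFun, (injOn_gammaSet hid hpn hptn hτ).ncard_image]
  rfl

lemma mapsTo_hFun (hid : i ≤ d) (hpn : p + d ≤ n) (hptn : p + d ≤ tn) :
    Set.MapsTo (hFun n tn i) (coSigOnly n d p i) (coSigOnly tn d p i) := by
  intro τ hτ
  rw [mem_coSigOnly_iff hid hptn, plusCount_hFun hid hpn hptn hτ, plusSet_hFun]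
  obtain ⟨h, rfl⟩ := (mem_coSigOnly_iff hid hpn).1 hτ
  exact ⟨h.image_gammaSet hptn, rfl⟩

lemma leftInvOn_hFun (hid : i ≤ d) (hpn : p + d ≤ n) (hptn : p + d ≤ tn) :
    Set.LeftInvOn (hFun tn n i) (hFun n tn i) (coSigOnly n d p i) := by
  intro τ hτ
  obtain ⟨h, rfl⟩ := (mem_coSigOnly_iff hid hpn).1 hτ
  apply plusSet_injective
  rw [plusSet_hFun, plusSet_hFun, (h.leftInvOn_gammaSet hptn).image_image]

lemma singleStep_hFun (hid : i ≤ d) (hpn : p + d ≤ n) (hptn : p + d ≤ tn) (hqn : q + d ≤ n)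
    (hqtn : q + d ≤ tn) (hτ : τ ∈ coSigOnly n d p i) (hρ : ρ ∈ coSigOnly n d q i)
    (h : SingleStep τ ρ) : SingleStep (hFun n tn i τ) (hFun n tn i ρ) := by
  constructor
  · change plusSet (hFun n tn i τ) ⊂ plusSet (hFun n tn i ρ)
    rw [plusSet_hFun, plusSet_hFun]
    exact ((injOn_gammaSet hid hqn hqtn hρ).image_ssubset_image_iff h.1.subset subset_rfl).2 h.1
  · rw [plusCount_hFun hid hpn hptn hτ, plusCount_hFun hid hqn hqtn hρ, h.2]

end Shift

/-- **Corollary.** The map `h_{n,ñ,d,p,i}` (keep the first `i` coordinates, shift the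
rest by `ñ - n`) is a bijection between `𝒮̄_{p,i}(n,d)` and `𝒮̄_{p,i}(ñ,d)`; moreover it
preserves single steps from `𝒮̄_{p,i}(n,d)` to `𝒮̄_{p+1,i}(n,d)`. -/
theorem statement9 (n tn d p i : ℕ) (hdn : d < n) (hdtn : d < tn)
    (hp1 : 1 ≤ p) (hpn : p + d ≤ n) (hptn : p + d ≤ tn) (hi : i ≤ d) :
    Set.BijOn (hFun n tn i) (coSigOnly n d p i) (coSigOnly tn d p i) ∧
    (p + 1 + d ≤ n → p + 1 + d ≤ tn →
      ∀ τ ∈ coSigOnly n d p i, ∀ ρ ∈ coSigOnly n d (p + 1) i,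
        SingleStep τ ρ → SingleStep (hFun n tn i τ) (hFun n tn i ρ)) := by
  constructor
  · exact Set.InvOn.bijOn ⟨leftInvOn_hFun hi hpn hptn, leftInvOn_hFun hi hptn hpn⟩
      (mapsTo_hFun hi hpn hptn) (mapsTo_hFun hi hptn hpn)
  · intro hpn' hptn' τ hτ ρ hρ hstep
    exact singleStep_hFun hi hpn hptn hpn' hptn' hτ hρ hstep
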